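/- Let n be a sufficiently large integer and let 0 < ε < 2^{-3}. Let G be an n-vertex graph with average degree d(G) ≥ (log n)^4. Then G contains an 18-almost-regular bipartite subgraph G' with average degree d(G') ≥ d(G)/(400·log n) which is an (ε,s)-expander for some s ≥ d(G')/(log |V(G')|)^2. -/

import Mathlib

/-- The external neighbourhood of a vertex set `U` in a graph `G`. -/
def extNbhd {α : Type*} (G : SimpleGraph α) (U : Set α) : Set α :=
  {v | v ∉ U ∧ ∃ u ∈ U, G.Adj u v}

/-- `G`, regarded as an `n`-vertex graph, is an `(ε, s)`-expander: for every vertex set `U`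
and edge set `F ⊆ E(G)` with `1 ≤ |U| ≤ (2/3)n` and `|F| ≤ s|U|`, the external
neighbourhood of `U` in `G - F` has size at least `ε|U|/(log n)^2`. -/
def IsExpander {α : Type*} (n : ℕ) (G : SimpleGraph α) (ε s : ℝ) : Prop :=
  ∀ (U : Set α) (F : Set (Sym2 α)), F ⊆ G.edgeSet →
    1 ≤ U.ncard → (U.ncard : ℝ) ≤ 2 / 3 * n → (F.ncard : ℝ) ≤ s * U.ncard →
    ε * U.ncard / Real.logb 2 n ^ 2 ≤ ((extNbhd (G.deleteEdges F) U).ncard : ℝ)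

/-!
Passing to a bipartite subgraph and then to a densest subgraph costs only a constant factor and
makes all degrees at least some `k` of order `d(G)`. By Hall's theorem such a graph contains a
nonempty matching from a vertex set `B` onto all of `N(B)`; deleting it and repeating (Pyber) gives
`k` edge-disjoint matchings whose vertex classes decrease. Among about `log n` consecutive blocks of
these matchings, one has classes that shrink by at most a factor `2`, so the union `G₀` of its
matchings has maximum degree `t`, of order `k / log n`, and average degree of order `t` as well.

Inside `G₀` choose `W` maximising `e(W) / (|W| f(|W|))` for a slowly increasing weight `f`
(Komlós–Szemerédi). Removing one vertex cannot increase this ratio, so all degrees in `G₀[W]` are of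
order `t`. If few edges `F` and few vertices `N` separate `U` from the rest of `W`, then
`e(U ∪ N)` is at least about `|U| e(W) / |W|`, while `|U ∪ N|` is hardly larger than `|U|` and
`f(|U ∪ N|)` is smaller than `f(|W|)`, contradicting the choice of `W`.
-/

open Finset

section BipartiteSubgraph

theorem two_mul_card_filter_apply_ne {V : Type*} [Fintype V] [DecidableEq V] {a b : V}
    (hab : a ≠ b) : 2 * #{c : V → Bool | c a ≠ c b} = Fintype.card (V → Bool) := by
  let flip (c : V → Bool) : V → Bool := Function.update c a (!c a)
  have flip_flip (c : V → Bool) : flip (flip c) = c := by simp [flip]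
  have hflip : #{c : V → Bool | c a ≠ c b} = #{c : V → Bool | ¬c a ≠ c b} :=
    card_nbij' flip flip (by simp [Set.MapsTo, flip, hab.symm, Bool.eq_not])
      (by simp [Set.MapsTo, flip, hab.symm]) (fun c _ ↦ flip_flip c) fun c _ ↦ flip_flip c
  rw [two_mul, ← card_univ]
  nth_rw 2 [hflip]
  exact card_filter_add_card_filter_not _

theorem exists_ncard_edgeSet_le_two_mul_inf_comap_top {V : Type*} [Finite V]
    (G : SimpleGraph V) :
    ∃ c : V → Bool, G.edgeSet.ncard ≤ 2 * (G ⊓ (⊤ : SimpleGraph Bool).comap c).edgeSet.ncard := by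
  classical
  have := Fintype.ofFinite V
  let bichromatic (c : V → Bool) (e : Sym2 V) : Prop :=
    e ∈ ((⊤ : SimpleGraph Bool).comap c).edgeSet
  have half : ∀ e ∈ G.edgeFinset,
      2 * #(univ.bipartiteBelow bichromatic e) = Fintype.card (V → Bool) := by
    intro e
    induction e with | _ a b
    intro he
    simpa [bichromatic, bipartiteBelow] using
      two_mul_card_filter_apply_ne (G.ne_of_adj (by simpa using he))
  have hsum : ∑ _c : V → Bool, #G.edgeFinset ≤
      ∑ c, 2 * #(G.edgeFinset.bipartiteAbove bichromatic c) := by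
    rw [← mul_sum, sum_card_bipartiteAbove_eq_sum_card_bipartiteBelow, mul_sum, sum_congr rfl half]
    simp [mul_comm]
  obtain ⟨c, -, hc⟩ := exists_le_of_sum_le univ_nonempty hsum
  have hedges : (G ⊓ (⊤ : SimpleGraph Bool).comap c).edgeSet =
      (G.edgeFinset.bipartiteAbove bichromatic c : Set (Sym2 V)) := by
    ext e
    simp [bichromatic, bipartiteAbove]
  refine ⟨c, ?_⟩
  rwa [hedges, Set.ncard_coe_finset, ← G.coe_edgeFinset, Set.ncard_coe_finset]

end BipartiteSubgraph

section NestedMatchings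

variable {ι α : Type*} [DecidableEq α] {t : ι → Finset α}

theorem card_le_card_biUnion_of_minimal {B : Finset ι} (ht : ∀ b ∈ B, (t b).Nonempty)
    (hB : Minimal (fun S : Finset ι ↦ S.Nonempty ∧ #(S.biUnion t) ≤ #S) B) :
    ∀ S ⊆ B, #S ≤ #(S.biUnion t) := by
  classical
  intro S hSB
  by_contra! hlt
  have hS : S.Nonempty := card_pos.1 (by lia)
  obtain ⟨v, hv⟩ := hS
  have hpos : 0 < #(S.biUnion t) :=
    card_pos.2 ((ht v (hSB hv)).mono (subset_biUnion_of_mem t hv))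
  have hle : #((S.erase v).biUnion t) ≤ #(S.biUnion t) :=
    card_le_card (biUnion_subset_biUnion_of_subset_left t (erase_subset v S))
  have herase : #(S.erase v) = #S - 1 := card_erase_of_mem hv
  have hBerase : B ⊆ S.erase v :=
    hB.2 ⟨card_pos.1 (by lia), by lia⟩ ((erase_subset v S).trans hSB)
  exact notMem_erase v S (hBerase (hSB hv))

theorem exists_injOn_of_card_le_card_biUnion [Nonempty α] {B : Finset ι}
    (hB : ∀ S ⊆ B, #S ≤ #(S.biUnion t)) :
    ∃ f : ι → α, Set.InjOn f B ∧ ∀ b ∈ B, f b ∈ t b := by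
  classical
  obtain ⟨g, hg, hgt⟩ := (all_card_le_biUnion_card_iff_exists_injective fun b : B ↦ t b).1 <| by
    intro S
    have hS := hB (S.map (Function.Embedding.subtype _)) (map_subtype_subset S)
    rwa [card_map, map_eq_image, image_biUnion] at hS
  have hext (b : B) : Function.extend Subtype.val g (fun _ ↦ Classical.arbitrary α) b = g b :=
    Subtype.val_injective.extend_apply g _ b
  refine ⟨Function.extend Subtype.val g fun _ ↦ Classical.arbitrary α, ?_, ?_⟩
  · intro x hx y hy hxy
    rw [hext ⟨x, hx⟩, hext ⟨y, hy⟩] at hxy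
    exact congrArg Subtype.val (hg hxy)
  · intro b hb
    rw [hext ⟨b, hb⟩]
    exact hgt ⟨b, hb⟩

theorem exists_injOn_biUnion_eq_image [Nonempty α] {B : Finset ι} (hB : B.Nonempty)
    (ht : ∀ b ∈ B, (t b).Nonempty) (hcard : #(B.biUnion t) ≤ #B) :
    ∃ B' ⊆ B, B'.Nonempty ∧ ∃ f : ι → α,
      Set.InjOn f B' ∧ (∀ b ∈ B', f b ∈ t b) ∧ B'.biUnion t = B'.image f := by
  obtain ⟨B', hB'B, hmin⟩ := exists_minimal_le_of_wellFoundedLT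
    (fun S : Finset ι ↦ S.Nonempty ∧ #(S.biUnion t) ≤ #S) B ⟨hB, hcard⟩
  obtain ⟨f, hinj, hf⟩ := exists_injOn_of_card_le_card_biUnion
    (card_le_card_biUnion_of_minimal (fun b hb ↦ ht b (hB'B hb)) hmin)
  refine ⟨B', hB'B, hmin.prop.1, f, hinj, hf, (eq_of_subset_of_card_le ?_ ?_).symm⟩
  · exact image_subset_iff.2 fun b hb ↦ mem_biUnion.2 ⟨b, hb, hf b hb⟩
  · rw [card_image_of_injOn hinj]
    exact hmin.prop.2

/-- A sequence of `k` pairwise edge-disjoint matchings in the bipartite graph in which `b : ι` has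
neighbourhood `t b`. The `i`-th matching joins `b ∈ B i` to `f i b`, and both its vertex classes,
`B i` and its image under `f i`, contain those of all later matchings. Only the terms `i < k` are
matchings, but `B` is a full sequence so that it has a `k`-th term, bounding the earlier ones from
below. -/
structure IsNestedMatchings (t : ι → Finset α) (k : ℕ) (B : ℕ → Finset ι) (f : ℕ → ι → α) :
    Prop where
  nonempty : ∀ i, (B i).Nonempty
  antitone : Antitone B
  injOn : ∀ i < k, Set.InjOn (f i) (B i)
  mem : ∀ i < k, ∀ b ∈ B i, f i b ∈ t b
  ne : ∀ i j, i < j → j < k → ∀ b ∈ B j, f i b ≠ f j b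
  image_subset : ∀ i j, i ≤ j → j < k → (B j).image (f j) ⊆ (B i).image (f i)

namespace IsNestedMatchings

variable {k : ℕ} {B : ℕ → Finset ι} {f : ℕ → ι → α}

theorem eq_of_apply_eq (h : IsNestedMatchings t k B f) {i j : ℕ} (hi : i < k) (hj : j < k) {b : ι}
    (hbi : b ∈ B i) (hbj : b ∈ B j) (heq : f i b = f j b) : i = j := by
  rcases lt_trichotomy i j with hij | rfl | hji
  · exact absurd heq (h.ne i j hij hj b hbj)
  · rfl
  · exact absurd heq.symm (h.ne j i hji hi b hbi)

theorem cons {B₀ : Finset ι} {f₀ : ι → α} (hB₀ : B₀.Nonempty) (hinj : Set.InjOn f₀ B₀)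
    (hmem : ∀ b ∈ B₀, f₀ b ∈ t b) (himage : B₀.biUnion t = B₀.image f₀) (hB : B 0 ⊆ B₀)
    (h : IsNestedMatchings (fun b ↦ (t b).erase (f₀ b)) k B f) :
    IsNestedMatchings t (k + 1) (fun i ↦ i.casesOn B₀ B) (fun i ↦ i.casesOn f₀ f) where
  nonempty := by
    rintro (_ | i)
    exacts [hB₀, h.nonempty i]
  antitone := antitone_nat_of_succ_le <| by
    rintro (_ | i)
    exacts [hB, h.antitone i.le_succ]
  injOn := by
    rintro (_ | i) hi
    exacts [hinj, h.injOn i (by lia)]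
  mem := by
    rintro (_ | i) hi b hb
    exacts [hmem b hb, mem_of_mem_erase (h.mem i (by lia) b hb)]
  ne := by
    rintro (_ | i) (_ | j) hij hj b hb
    · lia
    · exact (ne_of_mem_erase (h.mem j (by lia) b hb)).symm
    · lia
    · exact h.ne i j (by lia) (by lia) b hb
  image_subset := by
    rintro (_ | i) (_ | j) hij hj
    · exact Subset.rfl
    · change (B j).image (f j) ⊆ B₀.image f₀
      rw [← himage, image_subset_iff]
      intro b hb
      exact mem_biUnion.2
        ⟨b, hB (h.antitone j.zero_le hb), mem_of_mem_erase (h.mem j (by lia) b hb)⟩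
    · lia
    · exact h.image_subset i j (by lia) (by lia)

end IsNestedMatchings

theorem exists_isNestedMatchings [Nonempty α] {k : ℕ} {B₀ : Finset ι} (hB₀ : B₀.Nonempty)
    (ht : ∀ b ∈ B₀, k ≤ #(t b)) (hcard : #(B₀.biUnion t) ≤ #B₀) :
    ∃ B f, B 0 ⊆ B₀ ∧ IsNestedMatchings t k B f := by
  induction k generalizing t B₀ with
  | zero =>
    exact ⟨fun _ ↦ B₀, fun _ _ ↦ Classical.arbitrary α, Subset.rfl, fun _ ↦ hB₀, antitone_const,
      by simp, by simp, by simp, by simp⟩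
  | succ k ih =>
    obtain ⟨B₁, hB₁, hne, f₁, hinj, hmem, himage⟩ := exists_injOn_biUnion_eq_image hB₀
      (fun b hb ↦ card_pos.1 (k.succ_pos.trans_le (ht b hb))) hcard
    have ht₁ : ∀ b ∈ B₁, k ≤ #((t b).erase (f₁ b)) := by
      intro b hb
      rw [card_erase_of_mem (hmem b hb)]
      exact Nat.le_sub_one_of_lt (ht b (hB₁ hb))
    have hcard₁ : #(B₁.biUnion fun b ↦ (t b).erase (f₁ b)) ≤ #B₁ := calc
      _ ≤ #(B₁.biUnion t) := card_le_card (biUnion_mono fun b _ ↦ erase_subset _ _)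
      _ = #B₁ := by rw [himage, card_image_of_injOn hinj]
    obtain ⟨B, f, hB, h⟩ := ih hne ht₁ hcard₁
    exact ⟨_, _, hB₁, h.cons hne hinj hmem himage hB⟩

end NestedMatchings

section MatchingUnion

variable {V κ : Type*}

/-- The number of edges of `G` with both ends in `W`. -/
noncomputable def numEdgesIn (G : SimpleGraph V) (W : Set V) : ℕ :=
  (G.edgeSet ∩ W.sym2).ncard

/-- The union over `i ∈ I` of the matchings that join `b ∈ B i` to `f i b`. A pair with `f i b = b`
contributes no edge. -/
def matchingUnion (I : Finset κ) (B : κ → Finset V) (f : κ → V → V) : SimpleGraph V :=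
  SimpleGraph.fromRel fun u v ↦ ∃ i ∈ I, u ∈ B i ∧ f i u = v

variable {I : Finset κ} {B : κ → Finset V} {f : κ → V → V} {S : Set V}

theorem matchingUnion_adj {u v : V} : (matchingUnion I B f).Adj u v ↔
    u ≠ v ∧ ((∃ i ∈ I, u ∈ B i ∧ f i u = v) ∨ ∃ i ∈ I, v ∈ B i ∧ f i v = u) :=
  SimpleGraph.fromRel_adj _ _ _

theorem matchingUnion_adj_apply (hS : ∀ i ∈ I, ∀ b ∈ B i, b ∈ S ∧ f i b ∉ S) {i : κ} (hi : i ∈ I)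
    {b : V} (hb : b ∈ B i) : (matchingUnion I B f).Adj b (f i b) := by
  refine matchingUnion_adj.2 ⟨fun h ↦ ?_, .inl ⟨i, hi, hb, rfl⟩⟩
  exact (hS i hi b hb).2 (h ▸ (hS i hi b hb).1)

theorem matchingUnion_le {G : SimpleGraph V} (h : ∀ i ∈ I, ∀ b ∈ B i, G.Adj b (f i b)) :
    matchingUnion I B f ≤ G := by
  intro u v huv
  obtain ⟨-, ⟨i, hi, hu, rfl⟩ | ⟨i, hi, hv, rfl⟩⟩ := matchingUnion_adj.1 huv
  exacts [h i hi u hu, (h i hi v hv).symm]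

theorem ncard_neighborSet_matchingUnion_le (hS : ∀ i ∈ I, ∀ b ∈ B i, b ∈ S ∧ f i b ∉ S)
    (hinj : ∀ i ∈ I, Set.InjOn (f i) (B i)) (v : V) :
    ((matchingUnion I B f).neighborSet v).ncard ≤ #I := by
  classical
  by_cases hv : v ∈ S
  · have hsub : (matchingUnion I B f).neighborSet v ⊆ (I.image (f · v) : Finset V) := by
      intro w hvw
      obtain ⟨-, ⟨i, hi, -, rfl⟩ | ⟨i, hi, hw, rfl⟩⟩ := matchingUnion_adj.1 hvw
      · exact mem_image_of_mem (f · v) hi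
      · exact absurd hv (hS i hi w hw).2
    calc
      _ ≤ #(I.image (f · v)) := by
        rw [← Set.ncard_coe_finset]
        exact Set.ncard_le_ncard hsub
      _ ≤ #I := card_image_le
  · let preimages (i : κ) : Finset V := {w ∈ B i | f i w = v}
    have hsub : (matchingUnion I B f).neighborSet v ⊆ (I.biUnion preimages : Finset V) := by
      intro w hvw
      obtain ⟨-, ⟨i, hi, hvB, -⟩ | ⟨i, hi, hw, hfw⟩⟩ := matchingUnion_adj.1 hvw
      · exact absurd (hS i hi v hvB).1 hv
      · exact mem_biUnion.2 ⟨i, hi, mem_filter.2 ⟨hw, hfw⟩⟩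
    have hcard : ∀ i ∈ I, #(preimages i) ≤ 1 := by
      intro i hi
      refine card_le_one.2 fun x hx y hy ↦ ?_
      rw [mem_filter] at hx hy
      exact hinj i hi hx.1 hy.1 (hx.2.trans hy.2.symm)
    calc
      _ ≤ #(I.biUnion preimages) := by
        rw [← Set.ncard_coe_finset]
        exact Set.ncard_le_ncard hsub
      _ ≤ #I * 1 := card_biUnion_le_card_mul _ _ _ hcard
      _ = #I := mul_one _

theorem sum_card_le_numEdgesIn_matchingUnion [Finite V] {W : Set V}
    (hS : ∀ i ∈ I, ∀ b ∈ B i, b ∈ S ∧ f i b ∉ S)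
    (heq : ∀ i ∈ I, ∀ j ∈ I, ∀ b, b ∈ B i → b ∈ B j → f i b = f j b → i = j)
    (hW : ∀ i ∈ I, ∀ b ∈ B i, b ∈ W ∧ f i b ∈ W) :
    ∑ i ∈ I, #(B i) ≤ numEdgesIn (matchingUnion I B f) W := by
  let edge (x : Σ _ : κ, V) : Sym2 V := s(x.2, f x.1 x.2)
  have edge_injOn : Set.InjOn edge (I.sigma B : Finset (Σ _ : κ, V)) := by
    rintro ⟨i, b⟩ hx ⟨j, b'⟩ hy hxy
    obtain ⟨hi, hb⟩ := mem_sigma.1 hx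
    obtain ⟨hj, hb'⟩ := mem_sigma.1 hy
    obtain ⟨rfl, hf⟩ | ⟨hbf, -⟩ := Sym2.eq_iff.1 hxy
    · obtain rfl := heq i hi j hj b hb hb' hf
      rfl
    · exact absurd (hbf ▸ (hS i hi b hb).1) (hS j hj b' hb').2
  rw [← card_sigma, ← Set.ncard_coe_finset, ← edge_injOn.ncard_image]
  refine Set.ncard_le_ncard ?_
  rintro _ ⟨⟨i, b⟩, hx, rfl⟩
  obtain ⟨hi, hb⟩ := mem_sigma.1 hx
  exact ⟨matchingUnion_adj_apply hS hi hb, Set.mk_mem_sym2_iff.2 (hW i hi b hb)⟩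

theorem IsNestedMatchings.sub_mul_card_le_numEdgesIn [Finite V] [DecidableEq V] {t : V → Finset V}
    {k : ℕ} {B : ℕ → Finset V} {f : ℕ → V → V} (h : IsNestedMatchings t k B f)
    {m n : ℕ} (hn : n ≤ k) (hS : ∀ i ∈ Ico m n, ∀ b ∈ B i, b ∈ S ∧ f i b ∉ S) :
    (n - m) * #(B n) ≤
      numEdgesIn (matchingUnion (Ico m n) B f) (B m ∪ (B m).image (f m) : Finset V) := by
  have hlt {i : ℕ} (hi : i ∈ Ico m n) : i < k := (mem_Ico.1 hi).2.trans_le hn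
  have hsum : #(Ico m n) • #(B n) ≤ ∑ i ∈ Ico m n, #(B i) :=
    card_nsmul_le_sum _ _ _ fun i hi ↦ card_le_card (h.antitone (mem_Ico.1 hi).2.le)
  rw [Nat.card_Ico, smul_eq_mul] at hsum
  refine hsum.trans (sum_card_le_numEdgesIn_matchingUnion hS
    (fun i hi j hj b ↦ h.eq_of_apply_eq (hlt hi) (hlt hj)) fun i hi b hb ↦ ?_)
  have hmi : m ≤ i := (mem_Ico.1 hi).1
  exact ⟨mem_union_left _ (h.antitone hmi hb),
    mem_union_right _ (h.image_subset m i hmi (hlt hi) (mem_image_of_mem _ hb))⟩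

end MatchingUnion

section AlmostRegular

theorem exists_le_two_mul_succ {a : ℕ → ℕ} {J : ℕ} (h0 : a 0 < 2 ^ J) (hJ : 0 < a J) :
    ∃ j < J, a j ≤ 2 * a (j + 1) := by
  by_contra! h
  have hhalving : ∀ j ≤ J, 2 ^ j * a j ≤ a 0 := by
    intro j
    induction j with
    | zero => simp
    | succ j ih =>
      intro hj
      calc
        2 ^ (j + 1) * a (j + 1) = 2 ^ j * (2 * a (j + 1)) := by ring
        _ ≤ 2 ^ j * a j := Nat.mul_le_mul_left _ (h j hj).le
        _ ≤ a 0 := ih (by lia)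
  exact h0.not_ge ((Nat.le_mul_of_pos_right _ hJ).trans (hhalving J le_rfl))

theorem exists_card_filter_ne_le_card_filter_eq {V : Type*} (W : Finset V) (c : V → Bool) :
    ∃ p, #{v ∈ W | c v ≠ p} ≤ #{v ∈ W | c v = p} := by
  rcases le_total #{v ∈ W | c v = true} #{v ∈ W | c v = false} with h | h
  · exact ⟨false, by simpa using h⟩
  · exact ⟨true, by simpa using h⟩

variable {V : Type*} [Finite V] {G : SimpleGraph V} {W : Set V} {k : ℕ}

theorem exists_isNestedMatchings_of_le_degree [DecidableEq V] (c : G.Coloring Bool)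
    (hW : W.Nonempty) (hk : ∀ v ∈ W, k ≤ (W ∩ G.neighborSet v).ncard) :
    ∃ (S : Set V) (t : V → Finset V) (B : ℕ → Finset V) (f : ℕ → V → V),
      IsNestedMatchings t k B f ∧
        ∀ i < k, ∀ b ∈ B i, (b ∈ S ∧ f i b ∉ S) ∧ G.Adj b (f i b) := by
  classical
  have := Fintype.ofFinite V
  have : Nonempty V := hW.to_type
  obtain ⟨p, hp⟩ := exists_card_filter_ne_le_card_filter_eq W.toFinset c
  let t (v : V) : Finset V := (W ∩ G.neighborSet v).toFinset
  have hne : ({v ∈ W.toFinset | c v = p} : Finset V).Nonempty := by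
    rw [← card_pos]
    have := card_filter_add_card_filter_not (s := W.toFinset) (c · = p)
    have := (Set.toFinset_nonempty.2 hW).card_pos
    lia
  have hdeg : ∀ b ∈ ({v ∈ W.toFinset | c v = p} : Finset V), k ≤ #(t b) := by
    intro b hb
    rw [← Set.ncard_eq_toFinset_card']
    exact hk b (Set.mem_toFinset.1 (mem_filter.1 hb).1)
  have hcard : #(({v ∈ W.toFinset | c v = p} : Finset V).biUnion t) ≤
      #{v ∈ W.toFinset | c v = p} := by
    refine (card_le_card (biUnion_subset.2 fun b hb w hw ↦ ?_)).trans hp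
    obtain ⟨hwW, hbw⟩ := Set.mem_toFinset.1 hw
    have hcb : c b = p := (mem_filter.1 hb).2
    exact mem_filter.2 ⟨Set.mem_toFinset.2 hwW, hcb ▸ (c.valid hbw).symm⟩
  obtain ⟨B, f, hB, h⟩ := exists_isNestedMatchings hne hdeg hcard
  refine ⟨{v | c v = p}, t, B, f, h, fun i hi b hb ↦ ?_⟩
  have hcb : c b = p := (mem_filter.1 (hB (h.antitone i.zero_le hb))).2
  have hadj : G.Adj b (f i b) := (Set.mem_toFinset.1 (h.mem i hi b hb)).2
  exact ⟨⟨hcb, fun hf ↦ c.valid hadj (hcb.trans hf.symm)⟩, hadj⟩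

theorem exists_le_almostRegular (c : G.Coloring Bool) (hW : W.Nonempty)
    (hk : ∀ v ∈ W, k ≤ (W ∩ G.neighborSet v).ncard) {J d : ℕ} (hJ : Nat.card V < 2 ^ J)
    (hd : J * d ≤ k) :
    ∃ G₀ ≤ G, (∀ v, (G₀.neighborSet v).ncard ≤ d) ∧
      ∃ W₀ : Set V, W₀.Nonempty ∧ d * W₀.ncard ≤ 4 * numEdgesIn G₀ W₀ := by
  classical
  obtain ⟨S, t, B, f, h, hf⟩ := exists_isNestedMatchings_of_le_degree c hW hk
  have hB₀ : #(B (0 * d)) < 2 ^ J := by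
    rw [← Set.ncard_coe_finset]
    exact (Set.ncard_le_card _).trans_lt hJ
  obtain ⟨j, hj, hBj⟩ := exists_le_two_mul_succ (a := fun j ↦ #(B (j * d))) hB₀
    (h.nonempty _).card_pos
  set m := j * d
  set n := (j + 1) * d
  have hmn : n - m = d := by simp [m, n, add_mul]
  have hnk : n ≤ k := (Nat.mul_le_mul_right d hj).trans hd
  have hlt {i : ℕ} (hi : i ∈ Ico m n) : i < k := (mem_Ico.1 hi).2.trans_le hnk
  have hS : ∀ i ∈ Ico m n, ∀ b ∈ B i, b ∈ S ∧ f i b ∉ S := fun i hi b hb ↦ (hf i (hlt hi) b hb).1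
  refine ⟨matchingUnion (Ico m n) B f, matchingUnion_le fun i hi b hb ↦ (hf i (hlt hi) b hb).2,
    fun v ↦ ?_, (B m ∪ (B m).image (f m) : Finset V), (h.nonempty m).mono subset_union_left, ?_⟩
  · rw [← hmn, ← Nat.card_Ico]
    exact ncard_neighborSet_matchingUnion_le hS (fun i hi ↦ h.injOn i (hlt hi)) v
  · have hverts : #(B m ∪ (B m).image (f m)) ≤ 2 * #(B m) := by
      have := card_union_le (B m) ((B m).image (f m))
      have := card_image_le (s := B m) (f := f m)
      lia
    have hedges := h.sub_mul_card_le_numEdgesIn hnk hS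
    rw [hmn] at hedges
    rw [Set.ncard_coe_finset]
    calc
      _ ≤ d * (2 * (2 * #(B n))) := by gcongr; exact hverts.trans (by gcongr)
      _ = 4 * (d * #(B n)) := by ring
      _ ≤ _ := by gcongr

end AlmostRegular

section Densest

variable {V : Type*} {G : SimpleGraph V} {f : ℕ → ℝ} {W : Set V} {r : ℝ}

/-- `W` is a nonempty vertex set maximising the weighted density `e(G[W]) / (|W| f(|W|))`, and `r`
is the maximum. The equation and the inequality are stated without division, so that the
inequality covers `X = ∅`. -/
structure IsDensest (G : SimpleGraph V) (f : ℕ → ℝ) (W : Set V) (r : ℝ) : Prop where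
  nonempty : W.Nonempty
  nonneg : 0 ≤ r
  numEdgesIn_eq : (numEdgesIn G W : ℝ) = r * (W.ncard * f W.ncard)
  numEdgesIn_le : ∀ X : Set V, (numEdgesIn G X : ℝ) ≤ r * (X.ncard * f X.ncard)

@[simp]
theorem numEdgesIn_empty : numEdgesIn G ∅ = 0 := by
  simp [numEdgesIn]

@[simp]
theorem numEdgesIn_univ : numEdgesIn G Set.univ = G.edgeSet.ncard := by
  simp [numEdgesIn]

@[simp]
theorem numEdgesIn_singleton (v : V) : numEdgesIn G {v} = 0 := by
  have hdisj : G.edgeSet ∩ {s(v, v)} = ∅ := by simp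
  rw [numEdgesIn, Set.sym2_singleton, hdisj, Set.ncard_empty]

variable [Finite V]

theorem exists_isDensest [Nonempty V] (G : SimpleGraph V) (hf : ∀ m, 0 < f m) :
    ∃ W r, IsDensest G f W r := by
  have : Nonempty {W : Set V // W.Nonempty} := ⟨⟨_, Set.univ_nonempty⟩⟩
  obtain ⟨⟨W, hW⟩, hmax⟩ := Finite.exists_max
    fun W : {W : Set V // W.Nonempty} ↦ (numEdgesIn G W : ℝ) / (W.1.ncard * f W.1.ncard)
  have hpos {X : Set V} (hX : X.Nonempty) : 0 < X.ncard * f X.ncard :=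
    mul_pos (Nat.cast_pos.2 hX.ncard_pos) (hf _)
  refine ⟨W, _, hW, div_nonneg (Nat.cast_nonneg _) (hpos hW).le,
    (div_mul_cancel₀ _ (hpos hW).ne').symm, fun X ↦ ?_⟩
  obtain rfl | hX := X.eq_empty_or_nonempty
  · simp
  · exact (div_le_iff₀ (hpos hX)).1 (hmax ⟨X, hX⟩)

theorem numEdgesIn_le_add {U N : Set V} {F : Set (Sym2 V)}
    (h : ∀ u ∈ U, ∀ w ∈ W \ U, G.Adj u w → w ∈ N ∨ s(u, w) ∈ F) :
    numEdgesIn G W ≤ numEdgesIn G (U ∪ N) + numEdgesIn G (W \ U) + F.ncard := by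
  have hcover : G.edgeSet ∩ W.sym2 ⊆
      G.edgeSet ∩ (U ∪ N).sym2 ∪ G.edgeSet ∩ (W \ U).sym2 ∪ F := by
    intro e
    induction e with | _ a b
    rintro ⟨hab : G.Adj a b, hW⟩
    obtain ⟨ha, hb⟩ := Set.mk_mem_sym2_iff.1 hW
    by_cases haU : a ∈ U <;> by_cases hbU : b ∈ U
    · exact .inl (.inl ⟨hab, Set.mk_mem_sym2_iff.2 ⟨.inl haU, .inl hbU⟩⟩)
    · obtain hbN | habF := h a haU b ⟨hb, hbU⟩ hab
      · exact .inl (.inl ⟨hab, Set.mk_mem_sym2_iff.2 ⟨.inl haU, .inr hbN⟩⟩)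
      · exact .inr habF
    · obtain haN | hbaF := h b hbU a ⟨ha, haU⟩ hab.symm
      · exact .inl (.inl ⟨hab, Set.mk_mem_sym2_iff.2 ⟨.inr haN, .inl hbU⟩⟩)
      · exact .inr (Sym2.eq_swap ▸ hbaF)
    · exact .inl (.inr ⟨hab, Set.mk_mem_sym2_iff.2 ⟨⟨ha, haU⟩, hb, hbU⟩⟩)
  calc
    _ ≤ _ := Set.ncard_le_ncard hcover
    _ ≤ _ := Set.ncard_union_le _ _
    _ ≤ _ := Nat.add_le_add_right (Set.ncard_union_le _ _) _

namespace IsDensest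

theorem mul_le_numEdgesIn_add (h : IsDensest G f W r) (hf : Monotone f) {U N : Set V}
    {F : Set (Sym2 V)} (hUW : U ⊆ W)
    (hUN : ∀ u ∈ U, ∀ w ∈ W \ U, G.Adj u w → w ∈ N ∨ s(u, w) ∈ F) :
    r * (U.ncard * f W.ncard) ≤ numEdgesIn G (U ∪ N) + F.ncard := by
  have hsplit : (numEdgesIn G W : ℝ) ≤
      numEdgesIn G (U ∪ N) + numEdgesIn G (W \ U) + F.ncard := by
    exact_mod_cast numEdgesIn_le_add hUN
  have hcard : ((W \ U).ncard : ℝ) = W.ncard - U.ncard := by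
    rw [Set.ncard_sdiff hUW, Nat.cast_sub (Set.ncard_le_ncard hUW)]
  have hrest : (numEdgesIn G (W \ U) : ℝ) ≤ r * ((W.ncard - U.ncard) * f W.ncard) := by
    rw [← hcard]
    refine (h.numEdgesIn_le _).trans ?_
    have := hf (Set.ncard_le_ncard (Set.sdiff_subset : W \ U ⊆ W))
    have := h.nonneg
    gcongr
  linarith [h.numEdgesIn_eq]

theorem mul_le_degree (h : IsDensest G f W r) (hf : Monotone f) {v : V} (hv : v ∈ W) :
    r * f W.ncard ≤ (W ∩ G.neighborSet v).ncard := by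
  have hle := h.mul_le_numEdgesIn_add hf (N := ∅) (F := (s(v, ·)) '' (W ∩ G.neighborSet v))
    (Set.singleton_subset_iff.2 hv) <| by
      rintro u rfl w hw huw
      exact .inr ⟨w, ⟨hw.1, huw⟩, rfl⟩
  have himage : (((s(v, ·)) '' (W ∩ G.neighborSet v)).ncard : ℝ) ≤
      (W ∩ G.neighborSet v).ncard := by
    exact_mod_cast Set.ncard_image_le
  simp only [Set.ncard_singleton, Nat.cast_one, one_mul, Set.union_empty, numEdgesIn_singleton,
    Nat.cast_zero, zero_add] at hle
  exact hle.trans himage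

end IsDensest

theorem exists_nonempty_forall_edgeDensity_le_degree [Nonempty V] (G : SimpleGraph V) :
    ∃ W : Set V, W.Nonempty ∧
      ∀ v ∈ W, (G.edgeSet.ncard / Nat.card V : ℝ) ≤ (W ∩ G.neighborSet v).ncard := by
  obtain ⟨W, r, h⟩ := exists_isDensest (f := fun _ ↦ 1) G fun _ ↦ one_pos
  refine ⟨W, h.nonempty, fun v hv ↦ le_trans ?_ (h.mul_le_degree monotone_const hv)⟩
  rw [div_le_iff₀ (Nat.cast_pos.2 Nat.card_pos)]
  simpa using h.numEdgesIn_le Set.univ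

end Densest

section ExpansionWeight

/-- The weight for which densest subgraphs are expanders. It takes values in `[1/2, 1]` and
increases with `log m` so slowly that passing from `m` to `3m/4` loses only, but at least, a
constant multiple of `1 / (log m)²`. -/
noncomputable def expansionWeight (m : ℕ) : ℝ :=
  1 - 8 / (16 + Real.logb 2 m)

theorem logb_two_natCast_nonneg (m : ℕ) : 0 ≤ Real.logb 2 m :=
  (Nat.cast_nonneg _).trans (by exact_mod_cast Real.natLog_le_logb m 2)

theorem one_le_logb_two_natCast {m : ℕ} (hm : 2 ≤ m) : 1 ≤ Real.logb 2 m := by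
  rw [← Real.logb_self_eq_one one_lt_two]
  exact Real.logb_le_logb_of_le one_lt_two two_pos (by exact_mod_cast hm)

theorem expansionWeight_le_one (m : ℕ) : expansionWeight m ≤ 1 := by
  have := logb_two_natCast_nonneg m
  exact sub_le_self _ (by positivity)

theorem half_le_expansionWeight (m : ℕ) : 1 / 2 ≤ expansionWeight m := by
  have hlog := logb_two_natCast_nonneg m
  have : 8 / (16 + Real.logb 2 m) ≤ 8 / 16 := by gcongr; linarith
  unfold expansionWeight
  linarith

theorem expansionWeight_pos (m : ℕ) : 0 < expansionWeight m :=
  one_half_pos.trans_le (half_le_expansionWeight m)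

theorem monotone_expansionWeight : Monotone expansionWeight := by
  intro a b hab
  have hlog : Real.logb 2 a ≤ Real.logb 2 b := by
    obtain rfl | ha := a.eq_zero_or_pos
    · simpa using logb_two_natCast_nonneg b
    · exact Real.logb_le_logb_of_le one_lt_two (Nat.cast_pos.2 ha) (Nat.cast_le.2 hab)
  have := logb_two_natCast_nonneg a
  unfold expansionWeight
  gcongr

theorem logb_two_three_quarters_le : Real.logb 2 (3 / 4) ≤ -(2 / 5) := by
  rw [Real.logb_le_iff_le_rpow one_lt_two (by norm_num),
    ← pow_le_pow_iff_left₀ (by norm_num) (by positivity) (n := 5) (by norm_num),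
    ← Real.rpow_mul_natCast zero_le_two]
  norm_num [Real.rpow_neg]

theorem lt_expansionWeight_sub {a m : ℕ} (hm : 100 ≤ Real.logb 2 m) (ha : 0 < a)
    (ham : (a : ℝ) ≤ 3 / 4 * m) :
    17 / 8 / Real.logb 2 m ^ 2 < expansionWeight m - expansionWeight a := by
  have ha₀ : (0 : ℝ) < a := Nat.cast_pos.2 ha
  have hlog : Real.logb 2 a ≤ Real.logb 2 m - 2 / 5 := calc
    _ ≤ Real.logb 2 (3 / 4 * m) := Real.logb_le_logb_of_le one_lt_two ha₀ ham
    _ = Real.logb 2 (3 / 4) + Real.logb 2 m :=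
      Real.logb_mul (by norm_num) (by linarith : (0 : ℝ) < m).ne'
    _ ≤ _ := by linarith [logb_two_three_quarters_le]
  have hlog₀ := logb_two_natCast_nonneg a
  unfold expansionWeight
  generalize Real.logb 2 m = L at *
  calc
    17 / 8 / L ^ 2 < 16 / 5 / (16 + L) ^ 2 := by
      rw [div_lt_div_iff₀ (by positivity) (by positivity)]
      nlinarith
    _ ≤ 8 / (16 + (L - 2 / 5)) - 8 / (16 + L) := by
      rw [div_sub_div _ _ (by linarith) (by linarith),
        div_le_div_iff₀ (by positivity) (by nlinarith)]
      nlinarith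
    _ ≤ 8 / (16 + Real.logb 2 a) - 8 / (16 + L) := by gcongr
    _ = _ := by ring

end ExpansionWeight

section Expander

variable {V : Type*} {G : SimpleGraph V} {W : Set V}

theorem IsExpander.mono_left {n : ℕ} {ε ε' s : ℝ} (h : IsExpander n G ε' s) (hε : ε ≤ ε') :
    IsExpander n G ε s := fun U F hF hU hUn hFU ↦
  le_trans (by gcongr) (h U F hF hU hUn hFU)

theorem isExpander_induce_of_forall {n : ℕ} {ε s : ℝ}
    (h : ∀ (U N : Set V) (F : Set (Sym2 V)), U.Nonempty → U ⊆ W → U.ncard ≤ 2 / 3 * (n : ℝ) →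
      F.ncard ≤ s * U.ncard → (∀ u ∈ U, ∀ w ∈ W \ U, G.Adj u w → w ∈ N ∨ s(u, w) ∈ F) →
      ε * U.ncard / Real.logb 2 n ^ 2 ≤ N.ncard) :
    IsExpander n (G.induce W) ε s := by
  intro U F _ hU hUn hFU
  have hval : Function.Injective (Subtype.val : W → V) := Subtype.val_injective
  have hcardU := Set.ncard_image_of_injective U hval
  rw [← Set.ncard_image_of_injective F (Sym2.map.injective hval), ← hcardU] at hFU
  rw [← hcardU] at hUn ⊢
  rw [← Set.ncard_image_of_injective _ hval]
  refine h _ _ _ ((Set.nonempty_of_ncard_ne_zero (by lia)).image _)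
    (Subtype.coe_image_subset W U) hUn hFU ?_
  rintro _ ⟨u, hu, rfl⟩ w ⟨hw, hwU⟩ huw
  by_cases hF : s(u, ⟨w, hw⟩) ∈ F
  · exact .inr ⟨_, hF, rfl⟩
  · refine .inl ⟨⟨w, hw⟩, ⟨fun hwU' ↦ hwU ⟨_, hwU', rfl⟩, u, hu, ?_⟩, rfl⟩
    exact (SimpleGraph.deleteEdges_adj ..).2 ⟨huw, hF⟩

variable [Finite V] {r : ℝ}

theorem IsDensest.isExpander_induce (h : IsDensest G expansionWeight W r) (hr : 0 < r)
    (hW : 100 ≤ Real.logb 2 W.ncard) :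
    IsExpander W.ncard (G.induce W) (1 / 8)
      (2 * (r * expansionWeight W.ncard) / Real.logb 2 W.ncard ^ 2) := by
  refine isExpander_induce_of_forall fun U N F hU hUW hUcard hF hUN ↦ ?_
  by_contra! hN
  have hsplit := h.mul_le_numEdgesIn_add monotone_expansionWeight hUW hUN
  have hdense := h.numEdgesIn_le (U ∪ N)
  have hunion : ((U ∪ N).ncard : ℝ) ≤ U.ncard + N.ncard := by
    exact_mod_cast Set.ncard_union_le U N
  have hU₀ : (0 : ℝ) < U.ncard := Nat.cast_pos.2 hU.ncard_pos
  have hL : (10000 : ℝ) ≤ Real.logb 2 W.ncard ^ 2 := by nlinarith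
  have hgrowth : ((U ∪ N).ncard : ℝ) ≤ (1 + 1 / 8 / Real.logb 2 W.ncard ^ 2) * U.ncard := by
    rw [mul_div_right_comm] at hN
    linarith
  have hsmall : 1 / 8 / Real.logb 2 W.ncard ^ 2 ≤ 1 / 8 :=
    div_le_self (by norm_num) (by linarith)
  have hgap := lt_expansionWeight_sub hW (hU.mono Set.subset_union_left).ncard_pos
    (by nlinarith : ((U ∪ N).ncard : ℝ) ≤ 3 / 4 * W.ncard)
  have hle₁ := expansionWeight_le_one (U ∪ N).ncard
  have hle₂ := expansionWeight_le_one W.ncard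
  have hpos := expansionWeight_pos (U ∪ N).ncard
  generalize expansionWeight (U ∪ N).ncard = f₁ at *
  generalize expansionWeight W.ncard = f₂ at *
  generalize Real.logb 2 W.ncard ^ 2 = L at *
  have hscaled : r * U.ncard * f₂ ≤ r * U.ncard * (f₁ + 17 / 8 / L) := calc
    _ = r * (U.ncard * f₂) := by ring
    _ ≤ r * ((U ∪ N).ncard * f₁) + 2 * (r * f₂) / L * U.ncard := by linarith
    _ ≤ r * ((1 + 1 / 8 / L) * U.ncard * f₁) + 2 * (r * f₂) / L * U.ncard := by gcongr
    _ = r * U.ncard * (f₁ + (f₁ / 8 + 2 * f₂) / L) := by ring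
    _ ≤ r * U.ncard * (f₁ + 17 / 8 / L) := by gcongr; linarith
  have := le_of_mul_le_mul_left hscaled (by positivity)
  linarith

theorem exists_isExpander_induce_of_le_numEdgesIn {W₀ : Set V} {d : ℝ} (hd : 2 ^ 101 ≤ d)
    (hW₀ : W₀.Nonempty) (hdense : d * W₀.ncard ≤ numEdgesIn G W₀) :
    ∃ W : Set V, W.Nonempty ∧ (∀ v ∈ W, d / 2 ≤ (W ∩ G.neighborSet v).ncard) ∧
      d / 2 * W.ncard ≤ numEdgesIn G W ∧
      IsExpander W.ncard (G.induce W) (1 / 8)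
        (2 * numEdgesIn G W / W.ncard / Real.logb 2 W.ncard ^ 2) := by
  have : Nonempty V := hW₀.to_type
  obtain ⟨W, r, h⟩ := exists_isDensest G expansionWeight_pos
  have hW₀_pos : (0 : ℝ) < W₀.ncard := Nat.cast_pos.2 hW₀.ncard_pos
  have hdr : d ≤ r := by
    refine le_of_mul_le_mul_right ((hdense.trans (h.numEdgesIn_le W₀)).trans ?_) hW₀_pos
    exact mul_le_mul_of_nonneg_left
      (mul_le_of_le_one_right hW₀_pos.le (expansionWeight_le_one _)) h.nonneg
  have hdr_half : d / 2 ≤ r * expansionWeight W.ncard := by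
    nlinarith [half_le_expansionWeight W.ncard]
  have hdeg : ∀ v ∈ W, d / 2 ≤ (W ∩ G.neighborSet v).ncard := fun v hv ↦
    hdr_half.trans (h.mul_le_degree monotone_expansionWeight hv)
  have hW_pos : (0 : ℝ) < W.ncard := Nat.cast_pos.2 h.nonempty.ncard_pos
  have hlog : 100 ≤ Real.logb 2 W.ncard := by
    obtain ⟨v, hv⟩ := h.nonempty
    have hcard : ((W ∩ G.neighborSet v).ncard : ℝ) ≤ W.ncard := by
      exact_mod_cast Set.ncard_le_ncard Set.inter_subset_left
    rw [Real.le_logb_iff_rpow_le one_lt_two hW_pos]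
    calc
      (2 : ℝ) ^ (100 : ℝ) = 2 ^ 101 / 2 := by norm_num
      _ ≤ d / 2 := by gcongr
      _ ≤ (W ∩ G.neighborSet v).ncard := hdeg v hv
      _ ≤ W.ncard := hcard
  have hdensity : numEdgesIn G W / W.ncard = r * expansionWeight W.ncard := by
    rw [h.numEdgesIn_eq, mul_left_comm, mul_div_cancel_left₀ _ hW_pos.ne']
  refine ⟨W, h.nonempty, hdeg, (le_div_iff₀ hW_pos).1 (hdr_half.trans_eq hdensity.symm), ?_⟩
  rw [mul_div_assoc 2, hdensity]
  exact h.isExpander_induce (by linarith) hlog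

end Expander

section InducedSubgraph

variable {V : Type*} {G G₀ : SimpleGraph V} (h : G₀ ≤ G) (W : Set V)

theorem coe_induce_toSubgraph :
    ((SimpleGraph.toSubgraph G₀ h).induce W).coe = G₀.induce W := by
  ext v w
  exact ⟨fun hvw ↦ hvw.2.2, fun hvw ↦ ⟨v.2, w.2, hvw⟩⟩

theorem ncard_edgeSet_induce_toSubgraph :
    ((SimpleGraph.toSubgraph G₀ h).induce W).edgeSet.ncard = numEdgesIn G₀ W := by
  rw [numEdgesIn]
  congr 1
  ext e
  induction e with | _ a b
  simp [and_assoc, and_comm]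

variable {W}

theorem neighborSet_induce_toSubgraph {v : V} (hv : v ∈ W) :
    ((SimpleGraph.toSubgraph G₀ h).induce W).neighborSet v = W ∩ G₀.neighborSet v := by
  ext w
  simp [hv]

end InducedSubgraph

section AlmostRegularExpander

theorem div_ten_mul_le_natCast_div {d ℓ : ℝ} {k J : ℕ} (hℓ : 0 < ℓ) (hJ : 0 < J)
    (hJℓ : J ≤ 2 * ℓ) (hk : d / 4 ≤ k) (hd : 40 * ℓ ≤ d) : d / (10 * ℓ) ≤ (k / J : ℕ) := by
  have hone : 1 ≤ d / (40 * ℓ) := (one_le_div (by positivity)).2 hd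
  have : (0 : ℝ) < J := Nat.cast_pos.2 hJ
  calc
    d / (10 * ℓ) = d / 4 / (2 * ℓ) - d / (40 * ℓ) := by
      field_simp
      ring
    _ ≤ k / J - 1 := by
      gcongr
    _ ≤ (k / J : ℕ) := by
      rw [← Nat.floor_div_eq_div (K := ℝ)]
      exact (Nat.sub_one_lt_floor _).le

variable {V : Type*} [Finite V]

theorem exists_le_coloring_degree [Nonempty V] (G : SimpleGraph V) :
    ∃ G₁ ≤ G, Nonempty (G₁.Coloring Bool) ∧ ∃ W : Set V, W.Nonempty ∧
      ∀ v ∈ W, (G.edgeSet.ncard / (2 * Nat.card V) : ℝ) ≤ (W ∩ G₁.neighborSet v).ncard := by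
  obtain ⟨c, hc⟩ := exists_ncard_edgeSet_le_two_mul_inf_comap_top G
  set G₁ := G ⊓ (⊤ : SimpleGraph Bool).comap c
  obtain ⟨W, hW, hdeg⟩ := exists_nonempty_forall_edgeDensity_le_degree G₁
  refine ⟨G₁, inf_le_left, ⟨.mk c fun h ↦ h.2⟩, W, hW, fun v hv ↦ le_trans ?_ (hdeg v hv)⟩
  rw [← div_div]
  gcongr
  rw [div_le_iff₀' two_pos]
  exact_mod_cast hc

theorem exists_le_coloring_almostRegular [Nontrivial V] (G : SimpleGraph V)
    (hG : 40 * Real.logb 2 (Nat.card V) ≤ 2 * G.edgeSet.ncard / Nat.card V) :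
    ∃ G₀ ≤ G, Nonempty (G₀.Coloring Bool) ∧ ∃ d : ℕ,
      (2 * G.edgeSet.ncard / Nat.card V : ℝ) / (10 * Real.logb 2 (Nat.card V)) ≤ d ∧
      (∀ v, (G₀.neighborSet v).ncard ≤ d) ∧
      ∃ W : Set V, W.Nonempty ∧ d * W.ncard ≤ 4 * numEdgesIn G₀ W := by
  obtain ⟨G₁, hG₁, ⟨c⟩, W, hW, hdeg⟩ := exists_le_coloring_degree G
  have hdeg_ceil : ∀ v ∈ W,
      ⌈(G.edgeSet.ncard / (2 * Nat.card V) : ℝ)⌉₊ ≤ (W ∩ G₁.neighborSet v).ncard :=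
    fun v hv ↦ Nat.ceil_le.2 (hdeg v hv)
  have hlog := one_le_logb_two_natCast (Finite.one_lt_card (α := V))
  have hJ : ((Nat.log 2 (Nat.card V) + 1 : ℕ) : ℝ) ≤ 2 * Real.logb 2 (Nat.card V) := by
    have := Real.natLog_le_logb (Nat.card V) 2
    push_cast at this ⊢
    linarith
  obtain ⟨G₀, hG₀, hmax, hdense⟩ := exists_le_almostRegular c hW hdeg_ceil
    (Nat.lt_pow_succ_log_self one_lt_two _) (Nat.mul_div_le _ (Nat.log 2 (Nat.card V) + 1))
  refine ⟨G₀, hG₀.trans hG₁, ⟨c.comp (.ofLE hG₀)⟩, _, ?_, hmax, hdense⟩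
  refine div_ten_mul_le_natCast_div (by linarith) (Nat.succ_pos _) hJ ?_ hG
  refine le_trans (le_of_eq ?_) (Nat.le_ceil _)
  ring

theorem statement2_general [Nontrivial V] (G : SimpleGraph V)
    (hG : 2 ^ 107 * Real.logb 2 (Nat.card V) ≤ 2 * G.edgeSet.ncard / Nat.card V) :
    ∃ H : G.Subgraph, H.coe.Colorable 2 ∧
      (∀ v ∈ H.verts, ∀ w ∈ H.verts,
        ((H.neighborSet v).ncard : ℝ) ≤ 8 * (H.neighborSet w).ncard) ∧
      (2 * G.edgeSet.ncard / Nat.card V : ℝ) / (40 * Real.logb 2 (Nat.card V)) ≤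
        2 * H.edgeSet.ncard / H.verts.ncard ∧
      IsExpander H.verts.ncard H.coe (1 / 8)
        (2 * H.edgeSet.ncard / H.verts.ncard / Real.logb 2 H.verts.ncard ^ 2) := by
  have hlog := one_pos.trans_le (one_le_logb_two_natCast (Finite.one_lt_card (α := V)))
  obtain ⟨G₀, hG₀, ⟨c⟩, d, hd, hmax, W₀, hW₀, hdense⟩ :=
    exists_le_coloring_almostRegular G (le_trans (by gcongr; norm_num) hG)
  have hd_large : (2 ^ 101 : ℝ) ≤ d / 4 := by
    have := (le_div_iff₀ hlog).2 hG
    rw [mul_comm 10, ← div_div] at hd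
    linarith
  obtain ⟨W, hW, hmin, hedges, hexp⟩ := exists_isExpander_induce_of_le_numEdgesIn hd_large hW₀
    (by rw [div_mul_eq_mul_div, div_le_iff₀' four_pos]; exact_mod_cast hdense)
  refine ⟨(SimpleGraph.toSubgraph G₀ hG₀).induce W, ?_, fun v hv w hw ↦ ?_, ?_, ?_⟩
  · rw [coe_induce_toSubgraph]
    exact SimpleGraph.Coloring.colorable (c.comp (SimpleGraph.Embedding.induce W).toHom)
  · have hneighbors {u : V} (hu : u ∈ W) := neighborSet_induce_toSubgraph hG₀ hu
    rw [hneighbors hv, hneighbors hw]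
    have hv_le : ((W ∩ G₀.neighborSet v).ncard : ℝ) ≤ d := by
      exact_mod_cast (Set.ncard_le_ncard Set.inter_subset_right).trans (hmax v)
    linarith [hmin w hw]
  · rw [ncard_edgeSet_induce_toSubgraph]
    calc
      _ = 2 * G.edgeSet.ncard / Nat.card V / (10 * Real.logb 2 (Nat.card V)) / 4 := by ring
      _ ≤ d / 4 := by gcongr
      _ ≤ 2 * numEdgesIn G₀ W / W.ncard := by
        rw [le_div_iff₀ (Nat.cast_pos.2 hW.ncard_pos)]
        linarith
  · rw [ncard_edgeSet_induce_toSubgraph, coe_induce_toSubgraph]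
    exact hexp

end AlmostRegularExpander

theorem eventually_mul_logb_natCast_le_pow_four (C : ℝ) :
    ∀ᶠ n : ℕ in Filter.atTop, C * Real.logb 2 n ≤ Real.logb 2 n ^ 4 := by
  have htendsto := (Real.tendsto_logb_atTop one_lt_two).comp (tendsto_natCast_atTop_atTop (R := ℝ))
  filter_upwards [htendsto.eventually_ge_atTop C, htendsto.eventually_ge_atTop 1] with n hC hone
  calc
    C * Real.logb 2 n ≤ Real.logb 2 n ^ 3 * Real.logb 2 n := by
      gcongr
      exact hC.trans (le_self_pow₀ hone three_ne_zero)
    _ = Real.logb 2 n ^ 4 := by ring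

/-- For sufficiently large `n` and `0 < ε < 2⁻³`: every `n`-vertex graph `G` with
`d(G) ≥ (log n)^4` contains an `18`-almost-regular bipartite subgraph `G'` with
`d(G') ≥ d(G)/(400 log n)` which is an `(ε,s)`-expander for some
`s ≥ d(G')/(log |V(G')|)^2`. -/
theorem statement2 :
    ∃ N : ℕ, ∀ n : ℕ, N ≤ n → ∀ ε : ℝ, 0 < ε → ε < (2 : ℝ) ^ (-(3 : ℤ)) →
      ∀ G : SimpleGraph (Fin n),
        Real.logb 2 n ^ 4 ≤ 2 * (G.edgeSet.ncard : ℝ) / n →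
        ∃ (H : G.Subgraph) (s : ℝ),
          H.coe.Colorable 2 ∧
          (∀ v ∈ H.verts, ∀ w ∈ H.verts,
            ((H.neighborSet v).ncard : ℝ) ≤ 18 * ((H.neighborSet w).ncard : ℝ)) ∧
          (2 * (G.edgeSet.ncard : ℝ) / n) / (400 * Real.logb 2 n) ≤
            2 * (H.edgeSet.ncard : ℝ) / (H.verts.ncard : ℝ) ∧
          (2 * (H.edgeSet.ncard : ℝ) / (H.verts.ncard : ℝ)) /
              Real.logb 2 (H.verts.ncard) ^ 2 ≤ s ∧
          IsExpander H.verts.ncard H.coe ε s := by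
  obtain ⟨N, hN⟩ := Filter.eventually_atTop.1 (eventually_mul_logb_natCast_le_pow_four (2 ^ 107))
  refine ⟨max N 2, fun n hn ε _ hε G hG ↦ ?_⟩
  have htwo : 2 ≤ n := le_of_max_le_right hn
  have : Nontrivial (Fin n) := Fin.nontrivial_iff_two_le.2 htwo
  have hgeneral := statement2_general G
  simp only [Nat.card_fin] at hgeneral
  obtain ⟨H, hcol, hreg, hdeg, hexp⟩ := hgeneral ((hN n (le_of_max_le_left hn)).trans hG)
  refine ⟨H, _, hcol, fun v hv w hw ↦ (hreg v hv w hw).trans (by gcongr; norm_num),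
    le_trans ?_ hdeg, le_rfl, hexp.mono_left (hε.le.trans (by norm_num))⟩
  have := one_le_logb_two_natCast htwo
  gcongr
  norm_num
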